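/- Let C be a clutter with edge ideal I(C) ⊂ R = K[x_1,...,x_n]. If D = C[S] is the induced subclutter of C on a subset S of the vertices, then reg(R/I(D)) ≤ reg(R/I(C)). -/

import Mathlib

open MvPolynomial

/-- A clutter on the vertex set `Fin n`: a family of edges, none containing another. -/
structure Clutter (n : ℕ) : Type where
  edges : Finset (Finset (Fin n))
  antichain : ∀ e ∈ edges, ∀ f ∈ edges, e ⊆ f → e = f

/-- The squarefree monomial `∏_{i ∈ e} xᵢ` associated to a set of vertices. -/
noncomputable def edgeMonomial (K : Type) [Field K] {n : ℕ} (e : Finset (Fin n)) :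
    MvPolynomial (Fin n) K :=
  ∏ i ∈ e, X i

/-- The edge ideal of a clutter. -/
noncomputable def Clutter.edgeIdeal (K : Type) [Field K] {n : ℕ} (C : Clutter n) :
    Ideal (MvPolynomial (Fin n) K) :=
  Ideal.span (edgeMonomial K '' ↑C.edges)

/-- A finite graded free resolution of `R/I`, where `R = K[x₁,…,xₙ]`.
`F_i = ⊕_j R(-tw i j)` with `rk i` summands, differentials `δ i : F_{i+1} → F_i`
given by matrices with homogeneous entries of the correct degrees, exact, and
augmented by a degree-preserving surjection `F₀ → R/I`. -/
structure GFR (n : ℕ) (K : Type) [Field K] (I : Ideal (MvPolynomial (Fin n) K)) : Type where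
  len : ℕ
  rk : ℕ → ℕ
  rk_zero : ∀ i, len < i → rk i = 0
  tw : (i : ℕ) → Fin (rk i) → ℕ
  δ : (i : ℕ) → ((Fin (rk (i + 1)) → MvPolynomial (Fin n) K) →ₗ[MvPolynomial (Fin n) K]
        (Fin (rk i) → MvPolynomial (Fin n) K))
  δ_homog : ∀ (i : ℕ) (k : Fin (rk (i + 1))) (j : Fin (rk i)),
      δ i (Pi.single k 1) j = 0 ∨
        (tw i j ≤ tw (i + 1) k ∧ (δ i (Pi.single k 1) j).IsHomogeneous (tw (i + 1) k - tw i j))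
  aug : (Fin (rk 0) → MvPolynomial (Fin n) K) →ₗ[MvPolynomial (Fin n) K] MvPolynomial (Fin n) K
  aug_homog : ∀ j : Fin (rk 0), (aug (Pi.single j 1)).IsHomogeneous (tw 0 j)
  aug_surj : ∀ r : MvPolynomial (Fin n) K, ∃ x, r - aug x ∈ I
  exact_zero : LinearMap.range (δ 0) = Submodule.comap aug I
  exact_succ : ∀ i : ℕ, LinearMap.range (δ (i + 1)) = LinearMap.ker (δ i)

/-- The Castelnuovo–Mumford regularity of `R/I`:
the least `r` such that `R/I` admits a (finite) graded free resolution all of whose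
`i`-th twists are at most `r + i`.  (This value is attained by the minimal graded free
resolution, so it equals `max { j - i : b_{ij}(R/I) ≠ 0 }`.) -/
noncomputable def regR {n : ℕ} {K : Type} [Field K] (I : Ideal (MvPolynomial (Fin n) K)) : ℕ :=
  sInf { r : ℕ | ∃ F : GFR n K I, ∀ (i : ℕ) (j : Fin (F.rk i)), F.tw i j ≤ r + i }

/-- The induced subclutter `C[S]` on a set `S` of vertices: its edges are precisely the
edges of `C` contained in `S`. -/
def Clutter.induced {n : ℕ} (C : Clutter n) (S : Finset (Fin n)) : Clutter n where
  edges := C.edges.filter (fun e => e ⊆ S)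
  antichain := fun e he f hf hef =>
    C.antichain e (Finset.mem_filter.mp he).1 f (Finset.mem_filter.mp hf).1 hef

/-!
Setting the variables outside `S` to zero is a retraction `ρ` of `R` onto `K[S]` that carries `I(C)`
into `I(D)`, and `I(D) ⊆ I(C)`. Let `G` be a minimal multigraded free resolution of `R/I(D)`, which
only involves the variables of `S`, and `F` an arbitrary graded free resolution of `R/I(C)`. There
are comparison maps `Φ : G → F` over `R/I(D) → R/I(C)` and, since `ρ(F)` is a complex over
`R/I(D)`, also `Ψ : ρ(F) → G`. The composite `Ψ ∘ ρ(Φ)` is homotopic to the identity of `ρ(G) = G`,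
hence is the identity modulo the maximal ideal because `G` is minimal. So `Φ` is injective modulo
the maximal ideal, and every pair (homological degree, twist) occurring in `G` occurs in `F`.

Resolutions of monomial ideals are built by iterated mapping cones, one generator at a time, and
made minimal by cancelling unit entries of the differential.
-/

/-- An augmented complex of finite free `R`-modules in total form: `B` indexes a basis of the direct
sum of all the terms, row `b` of `D` is the differential of the basis vector `b` (so a row vector
`x` has differential `x ᵥ* D`), and `aug b` is the augmentation of `b`. The augmentation is only
meaningful modulo an ideal `I`, which is why it is not part of the matrix. -/
structure AugComplex (B R : Type*) where
  D : Matrix B B R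
  aug : B → R

namespace AugComplex

open Matrix

section Comparison

variable {R B B' : Type*} [CommRing R] [Fintype B] [Fintype B']

/-- `P` is a complex augmented to `R ⧸ I`. -/
structure IsComplex (P : AugComplex B R) (I : Ideal R) : Prop where
  sq_eq_zero : P.D * P.D = 0
  mulVec_aug_mem : ∀ b, (P.D *ᵥ P.aug) b ∈ I

/-- `P` is a free resolution of `R ⧸ I`: the augmented complex is acyclic. A cycle of its total
complex is a pair `(w, s mod I)` with `w ᵥ* D = 0` and `w ⬝ᵥ aug ∈ I`. -/
structure IsResolution (P : AugComplex B R) (I : Ideal R) : Prop extends P.IsComplex I where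
  exact : ∀ (w : B → R) (s : R), w ᵥ* P.D = 0 → w ⬝ᵥ P.aug ∈ I →
    ∃ x, x ᵥ* P.D = w ∧ x ⬝ᵥ P.aug - s ∈ I

/-- `Φ` is a map of complexes lying over the identity of `R ⧸ I`. -/
structure IsChainMap (I : Ideal R) (P : AugComplex B R) (Q : AugComplex B' R)
    (Φ : Matrix B B' R) : Prop where
  comm : Φ * Q.D = P.D * Φ
  aug_sub_mem : ∀ b, (Φ *ᵥ Q.aug) b - P.aug b ∈ I

theorem dotProduct_mem {I : Ideal R} (x : B → R) {y : B → R} (hy : ∀ b, y b ∈ I) : x ⬝ᵥ y ∈ I :=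
  I.sum_mem fun b _ ↦ I.mul_mem_left _ (hy b)

theorem dotProduct_congr_of_ne_zero {x y z : B → R} (h : ∀ b, x b ≠ 0 → y b = z b) :
    x ⬝ᵥ y = x ⬝ᵥ z := by
  refine Finset.sum_congr rfl fun b _ ↦ ?_
  by_cases hb : x b = 0
  · simp only [hb, zero_mul]
  · rw [h b hb]

theorem vecMul_congr_of_ne_zero {ι : Type*} {x : B → R} {M N : Matrix B ι R}
    (h : ∀ b, x b ≠ 0 → M b = N b) : x ᵥ* M = x ᵥ* N :=
  funext fun j ↦ dotProduct_congr_of_ne_zero fun b hb ↦ congrFun (h b hb) j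

theorem dotProduct_mem_of_ne_zero {I : Ideal R} {x y : B → R} (h : ∀ b, x b ≠ 0 → y b ∈ I) :
    x ⬝ᵥ y ∈ I :=
  I.sum_mem fun b _ ↦ by
    by_cases hb : x b = 0
    · simp only [hb, zero_mul, zero_mem]
    · exact I.mul_mem_left _ (h b hb)

/-- The equations that `exists_lift` solves for the row `b` of `Φ`. -/
def LiftsRow (Q : AugComplex B' R) (I : Ideal R) (D : Matrix B B R) (T : Matrix B B' R)
    (s : B → R) (Φ : Matrix B B' R) (b : B) : Prop :=
  Φ b ᵥ* Q.D = D b ᵥ* Φ + T b ∧ Φ b ⬝ᵥ Q.aug - s b ∈ I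

variable {Q : AugComplex B' R} {I : Ideal R} {D : Matrix B B R} {T : Matrix B B' R} {s : B → R}

theorem IsResolution.exists_liftsRow (hQ : Q.IsResolution I) (hD : D * D = 0)
    (hT : D * T + T * Q.D = 0) (hs : ∀ b, (D *ᵥ s + T *ᵥ Q.aug) b ∈ I) {Φ : Matrix B B' R} {b : B}
    (hΦ : ∀ c, D b c ≠ 0 → LiftsRow Q I D T s Φ c) :
    ∃ x, x ᵥ* Q.D = D b ᵥ* Φ + T b ∧ x ⬝ᵥ Q.aug - s b ∈ I := by
  refine hQ.exact _ _ ?_ ?_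
  · have hrows : D b ᵥ* (Φ * Q.D) = D b ᵥ* (D * Φ + T) :=
      vecMul_congr_of_ne_zero fun c hc ↦ (hΦ c hc).1
    calc (D b ᵥ* Φ + T b) ᵥ* Q.D = D b ᵥ* (D * Φ + T) + (T * Q.D) b := by
          rw [add_vecMul, vecMul_vecMul, hrows]; rfl
      _ = (D * D * Φ + (D * T + T * Q.D)) b := by
          rw [Matrix.mul_assoc, vecMul_add, add_assoc]; rfl
      _ = 0 := by rw [hD, hT, Matrix.zero_mul, add_zero]; rfl
  · have haug : D b ⬝ᵥ (Φ *ᵥ Q.aug - s) ∈ I := dotProduct_mem_of_ne_zero fun c hc ↦ (hΦ c hc).2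
    have hsum := I.add_mem haug (hs b)
    rw [dotProduct_sub, dotProduct_mulVec] at hsum
    rw [add_dotProduct]
    convert hsum using 1
    change _ = _ + (D b ⬝ᵥ s + T b ⬝ᵥ Q.aug)
    ring

theorem IsResolution.exists_lift (hQ : Q.IsResolution I) {deg : B → ℕ}
    (hdeg : ∀ b c, D b c ≠ 0 → deg c < deg b) (hD : D * D = 0) (hT : D * T + T * Q.D = 0)
    (hs : ∀ b, (D *ᵥ s + T *ᵥ Q.aug) b ∈ I) :
    ∃ Φ : Matrix B B' R, Φ * Q.D = D * Φ + T ∧ ∀ b, (Φ *ᵥ Q.aug) b - s b ∈ I := by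
  suffices ∀ m, ∃ Φ, ∀ b, deg b < m → LiftsRow Q I D T s Φ b by
    obtain ⟨Φ, hΦ⟩ := this (Finset.univ.sup deg + 1)
    replace hΦ b := hΦ b (Nat.lt_succ_of_le (Finset.le_sup (Finset.mem_univ b)))
    exact ⟨Φ, funext fun b ↦ (hΦ b).1, fun b ↦ (hΦ b).2⟩
  intro m
  induction m with
  | zero => exact ⟨0, fun b hb ↦ absurd hb (Nat.not_lt_zero _)⟩
  | succ m ih =>
    obtain ⟨Φ, hΦ⟩ := ih
    have hrow (b : B) : ∃ x, deg b ≤ m → x ᵥ* Q.D = D b ᵥ* Φ + T b ∧ x ⬝ᵥ Q.aug - s b ∈ I := by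
      by_cases hb : deg b ≤ m
      · obtain ⟨x, hx⟩ := hQ.exists_liftsRow hD hT hs fun c hc ↦ hΦ c ((hdeg b c hc).trans_le hb)
        exact ⟨x, fun _ ↦ hx⟩
      · exact ⟨0, fun h ↦ absurd h hb⟩
    choose x hx using hrow
    let Φ' : Matrix B B' R := fun b ↦ if deg b < m then Φ b else x b
    have hΦΦ' {b : B} (hb : deg b ≤ m) : D b ᵥ* Φ' = D b ᵥ* Φ :=
      vecMul_congr_of_ne_zero fun c hc ↦ if_pos ((hdeg b c hc).trans_le hb)
    refine ⟨Φ', fun b hb ↦ ?_⟩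
    have hbm := Nat.le_of_lt_succ hb
    unfold LiftsRow
    rw [hΦΦ' hbm]
    by_cases h : deg b < m
    · have hΦb := hΦ b h
      simpa only [LiftsRow, Φ', if_pos h] using hΦb
    · simpa only [Φ', if_neg h] using hx b hbm

variable {P : AugComplex B R}

theorem IsComplex.vecMul_dotProduct_mem (hP : P.IsComplex I) (x : B → R) :
    (x ᵥ* P.D) ⬝ᵥ P.aug ∈ I := by
  rw [← dotProduct_mulVec]
  exact dotProduct_mem x hP.mulVec_aug_mem

theorem IsChainMap.vecMul_dotProduct_sub_mem {Φ : Matrix B B' R} (hΦ : IsChainMap I P Q Φ)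
    (x : B → R) : (x ᵥ* Φ) ⬝ᵥ Q.aug - x ⬝ᵥ P.aug ∈ I := by
  have h : x ⬝ᵥ (Φ *ᵥ Q.aug - P.aug) ∈ I := dotProduct_mem x hΦ.aug_sub_mem
  rwa [dotProduct_sub, dotProduct_mulVec] at h

theorem IsResolution.exists_isChainMap (hQ : Q.IsResolution I) (hP : P.IsComplex I) {deg : B → ℕ}
    (hdeg : ∀ b c, P.D b c ≠ 0 → deg c < deg b) : ∃ Φ, IsChainMap I P Q Φ := by
  obtain ⟨Φ, hΦ, haug⟩ := hQ.exists_lift (T := 0) (s := P.aug) hdeg hP.sq_eq_zero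
    (by simp) (by simpa using hP.mulVec_aug_mem)
  exact ⟨Φ, by rw [hΦ, add_zero], haug⟩

theorem IsResolution.exists_homotopy (hQ : Q.IsResolution I) (hP : P.IsComplex I) {deg : B → ℕ}
    (hdeg : ∀ b c, P.D b c ≠ 0 → deg c < deg b) {Φ Ψ : Matrix B B' R}
    (hΦ : IsChainMap I P Q Φ) (hΨ : IsChainMap I P Q Ψ) :
    ∃ H : Matrix B B' R, Φ - Ψ = P.D * H + H * Q.D := by
  obtain ⟨H, hH, -⟩ := hQ.exists_lift (D := -P.D) (T := Φ - Ψ) (s := 0) (deg := deg)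
    (fun b c h ↦ hdeg b c (neg_ne_zero.mp h))
    (by rw [Matrix.neg_mul, Matrix.mul_neg, neg_neg, hP.sq_eq_zero])
    (by rw [Matrix.neg_mul, Matrix.mul_sub, Matrix.sub_mul, hΦ.comm, hΨ.comm, neg_add_cancel])
    (fun b ↦ by
      have := I.sub_mem (hΦ.aug_sub_mem b) (hΨ.aug_sub_mem b)
      rw [sub_sub_sub_cancel_right] at this
      rwa [mulVec_zero, zero_add, sub_mulVec])
  exact ⟨H, by rw [hH, Matrix.neg_mul, add_neg_cancel_left]⟩

theorem IsChainMap.comp {B'' : Type*} [Fintype B''] {Q' : AugComplex B'' R} {Φ : Matrix B B' R}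
    {Ψ : Matrix B' B'' R} (hΦ : IsChainMap I P Q Φ) (hΨ : IsChainMap I Q Q' Ψ) :
    IsChainMap I P Q' (Φ * Ψ) where
  comm := by rw [Matrix.mul_assoc, hΨ.comm, ← Matrix.mul_assoc, hΦ.comm, Matrix.mul_assoc]
  aug_sub_mem b := by
    have h := I.add_mem (hΨ.vecMul_dotProduct_sub_mem (Φ b)) (hΦ.aug_sub_mem b)
    change _ - Φ b ⬝ᵥ Q.aug + (Φ b ⬝ᵥ Q.aug - _) ∈ I at h
    rwa [sub_add_sub_cancel] at h

theorem IsChainMap.one [DecidableEq B] : IsChainMap I P P 1 where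
  comm := by rw [Matrix.one_mul, Matrix.mul_one]
  aug_sub_mem b := by rw [one_mulVec, sub_self]; exact I.zero_mem

theorem IsResolution.exists_map_ne_zero {k : Type*} [CommRing k] [Nontrivial k]
    (hP : P.IsResolution I) (hQ : Q.IsComplex I) {degP : B → ℕ} {degQ : B' → ℕ}
    (hdegP : ∀ b c, P.D b c ≠ 0 → degP c < degP b) (hdegQ : ∀ b c, Q.D b c ≠ 0 → degQ c < degQ b)
    (κ : R →+* k) (hκ : P.D.map κ = 0) {Φ : Matrix B B' R} (hΦ : IsChainMap I P Q Φ) (b : B) :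
    ∃ j, κ (Φ b j) ≠ 0 := by
  classical
  obtain ⟨Ψ, hΨ⟩ := hP.exists_isChainMap hQ hdegQ
  obtain ⟨H, hH⟩ := hP.exists_homotopy hP.toIsComplex hdegP (hΦ.comp hΨ) IsChainMap.one
  have hmap : Φ.map κ * Ψ.map κ = 1 := by
    have := congrArg (fun M ↦ M.map κ) hH
    simp only [Matrix.map_sub κ (map_sub κ), Matrix.map_add κ (map_add κ), Matrix.map_mul, hκ,
      Matrix.map_one κ (map_zero κ) (map_one κ), Matrix.zero_mul, Matrix.mul_zero, add_zero] at this
    exact sub_eq_zero.mp this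
  by_contra! h
  refine one_ne_zero (α := k) ?_
  calc (1 : k) = (Φ.map κ * Ψ.map κ) b b := by rw [hmap, one_apply_eq]
    _ = 0 := Finset.sum_eq_zero fun j _ ↦ by simp only [map_apply, h j, zero_mul]

end Comparison

section Retract

variable {R B B' : Type*} [CommRing R] [Fintype B] [Fintype B'] {P : AugComplex B R}
  {P' : AugComplex B' R} {I : Ideal R}

theorem IsResolution.of_retract [DecidableEq B'] (hP : P.IsResolution I) {ι : Matrix B' B R}
    {π : Matrix B B' R} (hι : IsChainMap I P' P ι) (hπ : IsChainMap I P P' π) (hιπ : ι * π = 1) :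
    P'.IsResolution I where
  sq_eq_zero := by
    calc P'.D * P'.D = P'.D * P'.D * (ι * π) := by rw [hιπ, Matrix.mul_one]
      _ = ι * (P.D * P.D) * π := by
        rw [← Matrix.mul_assoc, Matrix.mul_assoc P'.D, ← hι.comm, ← Matrix.mul_assoc P'.D,
          ← hι.comm, Matrix.mul_assoc ι P.D P.D]
      _ = 0 := by rw [hP.sq_eq_zero, Matrix.mul_zero, Matrix.zero_mul]
  mulVec_aug_mem b := by
    have h := hι.vecMul_dotProduct_sub_mem (P'.D b)
    have hD : P'.D b ᵥ* ι = ι b ᵥ* P.D := congrFun hι.comm.symm b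
    rw [hD] at h
    exact (I.sub_mem_iff_right (hP.vecMul_dotProduct_mem _)).mp h
  exact w s hw hwa := by
    have hcycle : (w ᵥ* ι) ᵥ* P.D = 0 := by
      rw [vecMul_vecMul, hι.comm, ← vecMul_vecMul, hw, zero_vecMul]
    have haug : (w ᵥ* ι) ⬝ᵥ P.aug ∈ I :=
      (I.sub_mem_iff_left hwa).mp (hι.vecMul_dotProduct_sub_mem w)
    obtain ⟨x, hx, hxs⟩ := hP.exact _ s hcycle haug
    refine ⟨x ᵥ* π, ?_, ?_⟩
    · rw [vecMul_vecMul, hπ.comm, ← vecMul_vecMul, hx, vecMul_vecMul, hιπ, vecMul_one]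
    · simpa only [sub_add_sub_cancel] using I.add_mem (hπ.vecMul_dotProduct_sub_mem x) hxs

/-- `h` splits off a contractible direct summand of `P` with basis the complement of `B'` in `B`,
`g` being the inverse of `h` on that summand; `i` and `q` are the inclusion of and the projection to
the span of `B'`. -/
structure IsContraction (P : AugComplex B R) (h g : Matrix B B R) (i : Matrix B' B R)
    (q : Matrix B B' R) [DecidableEq B] [DecidableEq B'] : Prop where
  mul_self : h * h = 0
  mul_D_mul : h * P.D * h = h
  mulVec_aug : h *ᵥ P.aug = 0
  incl_mul_proj : i * q = 1
  proj_mul_incl : q * i = 1 - h * g - g * h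
  incl_mul : i * h = 0
  mul_proj : h * q = 0

namespace IsContraction

variable {h g : Matrix B B R} {i : Matrix B' B R} {q : Matrix B B' R} [DecidableEq B]
  [DecidableEq B']

theorem isChainMap_incl (c : P.IsContraction h g i q) (hP : P.IsComplex I) :
    IsChainMap I ⟨i * (P.D - P.D * h * P.D) * q, i *ᵥ P.aug⟩ P (i * (1 - P.D * h)) where
  comm := by
    have hM : (P.D - P.D * h * P.D) * (q * i) * (1 - P.D * h) = P.D - P.D * h * P.D := by
      have hMh : (P.D - P.D * h * P.D) * h = 0 := by
        rw [sub_mul, mul_assoc P.D, mul_assoc P.D, c.mul_D_mul, sub_self]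
      have hMD : (P.D - P.D * h * P.D) * P.D = 0 := by
        rw [sub_mul, mul_assoc _ P.D, hP.sq_eq_zero, mul_zero, sub_self]
      have hh : h * (1 - P.D * h) = 0 := by
        rw [mul_sub, mul_one, ← mul_assoc, c.mul_D_mul, sub_self]
      generalize P.D - P.D * h * P.D = M at hMh hMD ⊢
      calc M * (q * i) * (1 - P.D * h)
          = M - M * P.D * h - M * h * g * (1 - P.D * h) - M * g * (h * (1 - P.D * h)) := by
            rw [c.proj_mul_incl]; noncomm_ring
        _ = M := by rw [hMh, hMD, hh]; noncomm_ring
    calc i * (1 - P.D * h) * P.D = i * (P.D - P.D * h * P.D) := by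
          rw [Matrix.mul_assoc, sub_mul, one_mul]
      _ = i * ((P.D - P.D * h * P.D) * (q * i) * (1 - P.D * h)) := by rw [hM]
      _ = _ := by simp only [Matrix.mul_assoc]
  aug_sub_mem b := by
    have : (i * (1 - P.D * h)) *ᵥ P.aug = i *ᵥ P.aug := by
      rw [← mulVec_mulVec, sub_mulVec, ← mulVec_mulVec, c.mulVec_aug, mulVec_zero, one_mulVec,
        sub_zero]
    rw [this, sub_self]
    exact I.zero_mem

theorem isChainMap_proj (c : P.IsContraction h g i q) (hP : P.IsComplex I) :
    IsChainMap I P ⟨i * (P.D - P.D * h * P.D) * q, i *ᵥ P.aug⟩ ((1 - h * P.D) * q) where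
  comm := by
    have hM : (1 - h * P.D) * (q * i) * (P.D - P.D * h * P.D) = P.D - P.D * h * P.D := by
      have hhM : h * (P.D - P.D * h * P.D) = 0 := by
        rw [mul_sub, ← mul_assoc, ← mul_assoc, c.mul_D_mul, sub_self]
      have hDM : P.D * (P.D - P.D * h * P.D) = 0 := by
        rw [mul_sub, ← mul_assoc, ← mul_assoc, hP.sq_eq_zero, zero_mul, zero_mul, sub_self]
      have hh : (1 - h * P.D) * h = 0 := by rw [sub_mul, one_mul, c.mul_D_mul, sub_self]
      generalize P.D - P.D * h * P.D = M at hhM hDM ⊢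
      calc (1 - h * P.D) * (q * i) * M
          = M - h * (P.D * M) - (1 - h * P.D) * h * g * M - (1 - h * P.D) * g * (h * M) := by
            rw [c.proj_mul_incl]; noncomm_ring
        _ = M := by rw [hhM, hDM, hh]; noncomm_ring
    calc (1 - h * P.D) * q * (i * (P.D - P.D * h * P.D) * q)
        = (1 - h * P.D) * (q * i) * (P.D - P.D * h * P.D) * q := by simp only [Matrix.mul_assoc]
      _ = P.D * ((1 - h * P.D) * q) := by
        rw [hM, ← Matrix.mul_assoc, mul_sub, mul_one, mul_assoc]
  aug_sub_mem b := by
    have hq : q *ᵥ (i *ᵥ P.aug) = P.aug - h *ᵥ (g *ᵥ P.aug) := by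
      rw [mulVec_mulVec, c.proj_mul_incl, sub_mulVec, sub_mulVec, one_mulVec, ← mulVec_mulVec,
        ← mulVec_mulVec, c.mulVec_aug, mulVec_zero, sub_zero]
    have : ((1 - h * P.D) * q) *ᵥ (i *ᵥ P.aug) - P.aug = -(h *ᵥ (P.D *ᵥ P.aug)) := by
      rw [← mulVec_mulVec, hq, mulVec_sub, mulVec_mulVec, sub_mul, one_mul, c.mul_D_mul, sub_self,
        zero_mulVec, sub_zero, sub_mulVec, one_mulVec, ← mulVec_mulVec]
      abel
    rw [← Pi.sub_apply, this]
    exact I.neg_mem (dotProduct_mem _ hP.mulVec_aug_mem)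

theorem isResolution (c : P.IsContraction h g i q) (hP : P.IsResolution I) :
    IsResolution ⟨i * (P.D - P.D * h * P.D) * q, i *ᵥ P.aug⟩ I := by
  refine hP.of_retract (c.isChainMap_incl hP.toIsComplex) (c.isChainMap_proj hP.toIsComplex) ?_
  have hsq : (1 - P.D * h) * (1 - h * P.D) = 1 - P.D * h - h * P.D := by
    rw [mul_sub, mul_one, ← mul_assoc, sub_mul 1, one_mul, mul_assoc P.D, c.mul_self, mul_zero,
      sub_zero]
  calc i * (1 - P.D * h) * ((1 - h * P.D) * q)
      = i * ((1 - P.D * h) * (1 - h * P.D)) * q := by simp only [Matrix.mul_assoc]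
    _ = i * q - i * P.D * (h * q) - i * h * (P.D * q) := by
      rw [hsq]
      simp only [Matrix.mul_sub, Matrix.sub_mul, Matrix.mul_one, Matrix.mul_assoc]
    _ = 1 := by rw [c.incl_mul, c.mul_proj, c.incl_mul_proj]; simp

end IsContraction

end Retract

section Cancel

variable {R B : Type*} [CommRing R] {P : AugComplex B R} {I : Ideal R}

/-- Gaussian elimination: the complex obtained by cancelling the basis elements `j` and `k` against
each other, where `v` is the inverse of the entry `P.D k j`. -/
def cancel (P : AugComplex B R) (j k : B) (v : R) : AugComplex {b // b ≠ j ∧ b ≠ k} R where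
  D := Matrix.of fun b c ↦ P.D b c - P.D b j * v * P.D k c
  aug b := P.aug b

variable [Fintype B] [DecidableEq B]

theorem isContraction_single {j k : B} {v : R} (hjk : j ≠ k) (hv : v * P.D k j = 1)
    (hk : P.aug k = 0) :
    P.IsContraction (single j k v) (single k j (P.D k j))
      ((1 : Matrix B B R).submatrix (Subtype.val : {b // b ≠ j ∧ b ≠ k} → B) (Equiv.refl B))
      ((1 : Matrix B B R).submatrix (Equiv.refl B) Subtype.val) where
  mul_self := single_mul_single_of_ne _ _ _ _ hjk.symm _
  mul_D_mul := by rw [single_mul_mul_single, hv, one_mul]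
  mulVec_aug := by rw [single_mulVec, hk, mul_zero]; exact Function.update_eq_self j (0 : B → R)
  incl_mul_proj := by
    rw [one_submatrix_mul]
    exact submatrix_one _ Subtype.val_injective
  proj_mul_incl := by
    rw [single_mul_single_same, single_mul_single_same, hv, mul_comm, hv]
    ext b c
    change ∑ x : {b // b ≠ j ∧ b ≠ k}, (1 : Matrix B B R) b x * (1 : Matrix B B R) x c = _
    by_cases hb : b ≠ j ∧ b ≠ k
    · rw [Finset.sum_eq_single ⟨b, hb⟩ (fun x _ hx ↦ ?_) (by simp)]
      · simp [hb.1.symm, hb.2.symm]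
      · rw [one_apply_ne fun h ↦ hx (Subtype.ext h.symm), zero_mul]
    · rw [Finset.sum_eq_zero fun x _ ↦ ?_]
      · simp only [Matrix.sub_apply, one_apply, single_apply]
        grind
      · rw [one_apply_ne fun h : b = x ↦ hb (h ▸ x.2), zero_mul]
  incl_mul := by
    rw [one_submatrix_mul]
    ext b c
    exact single_apply_of_row_ne b.2.1.symm _ _ _
  mul_proj := by
    rw [mul_submatrix_one]
    ext b c
    exact single_apply_of_col_ne _ _ c.2.2.symm _

theorem IsResolution.cancel (hP : P.IsResolution I) {j k : B} {v : R} (hjk : j ≠ k)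
    (hv : v * P.D k j = 1) (hk : P.aug k = 0) : (P.cancel j k v).IsResolution I := by
  convert (isContraction_single hjk hv hk).isResolution hP using 1
  rw [one_submatrix_mul, mul_submatrix_one, AugComplex.cancel, AugComplex.mk.injEq]
  refine ⟨?_, ?_⟩
  · ext b c
    simp [mul_apply, single_apply, ite_and]
  · ext b
    simp [mulVec, one_apply, dotProduct]

end Cancel

section Cone

variable {R B₁ B₂ : Type*} [CommRing R] [Fintype B₁] [Fintype B₂] {P₁ : AugComplex B₁ R}
  {P₂ : AugComplex B₂ R} {Φ : Matrix B₁ B₂ R} {I : Ideal R} {m : R}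

/-- The mapping cone of `Φ`, augmented through its second summand. -/
def cone (P₁ : AugComplex B₁ R) (P₂ : AugComplex B₂ R) (Φ : Matrix B₁ B₂ R) :
    AugComplex (B₁ ⊕ B₂) R where
  D := fromBlocks (-P₁.D) Φ 0 P₂.D
  aug := Sum.elim 0 P₂.aug

theorem vecMul_cone_D (x : B₁ ⊕ B₂ → R) :
    x ᵥ* (cone P₁ P₂ Φ).D = Sum.elim (-((x ∘ Sum.inl) ᵥ* P₁.D))
      ((x ∘ Sum.inl) ᵥ* Φ + (x ∘ Sum.inr) ᵥ* P₂.D) := by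
  rw [cone, vecMul_fromBlocks, vecMul_neg, vecMul_zero, add_zero]

theorem dotProduct_cone_aug (x : B₁ ⊕ B₂ → R) :
    x ⬝ᵥ (cone P₁ P₂ Φ).aug = (x ∘ Sum.inr) ⬝ᵥ P₂.aug := by
  simp [cone, dotProduct]

theorem IsComplex.cone (h₁ : P₁.IsComplex (I.colon {m})) (h₂ : P₂.IsComplex I)
    (hΦ : IsChainMap I ⟨P₁.D, m • P₁.aug⟩ P₂ Φ) :
    (cone P₁ P₂ Φ).IsComplex (Ideal.span {m} ⊔ I) where
  sq_eq_zero := by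
    rw [AugComplex.cone, fromBlocks_multiply, Matrix.neg_mul, Matrix.mul_neg, neg_neg,
      h₁.sq_eq_zero, h₂.sq_eq_zero, Matrix.neg_mul, hΦ.comm]
    simp
  mulVec_aug_mem b := by
    rw [AugComplex.cone, fromBlocks_mulVec]
    cases b with
    | inl b =>
      have h : (Φ *ᵥ P₂.aug) b - m * P₁.aug b ∈ Ideal.span {m} ⊔ I :=
        Ideal.mem_sup_right (hΦ.aug_sub_mem b)
      have hm : m * P₁.aug b ∈ Ideal.span {m} ⊔ I :=
        Ideal.mem_sup_left (Ideal.mul_mem_right _ _ (Ideal.mem_span_singleton_self m))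
      simpa using Ideal.add_mem _ h hm
    | inr b => simpa using Ideal.mem_sup_right (h₂.mulVec_aug_mem b)

theorem IsResolution.cone (h₁ : P₁.IsResolution (I.colon {m})) (h₂ : P₂.IsResolution I)
    (hΦ : IsChainMap I ⟨P₁.D, m • P₁.aug⟩ P₂ Φ) :
    (cone P₁ P₂ Φ).IsResolution (Ideal.span {m} ⊔ I) where
  toIsComplex := h₁.toIsComplex.cone h₂.toIsComplex hΦ
  exact w s hw hwa := by
    rw [dotProduct_cone_aug] at hwa
    obtain ⟨r, i, hi, hri⟩ := Ideal.mem_span_singleton_sup.mp hwa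
    rw [vecMul_cone_D] at hw
    have hw₁ : (w ∘ Sum.inl) ᵥ* P₁.D = 0 := neg_eq_zero.mp (congrArg (· ∘ Sum.inl) hw)
    have hw₂ : (w ∘ Sum.inl) ᵥ* Φ + (w ∘ Sum.inr) ᵥ* P₂.D = 0 := congrArg (· ∘ Sum.inr) hw
    have haug (x : B₁ → R) : (x ᵥ* Φ) ⬝ᵥ P₂.aug - m * (x ⬝ᵥ P₁.aug) ∈ I := by
      simpa only [dotProduct_smul, smul_eq_mul] using hΦ.vecMul_dotProduct_sub_mem x
    have hw₁a : (-(w ∘ Sum.inl)) ⬝ᵥ P₁.aug ∈ I.colon {m} := by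
      have h := h₂.vecMul_dotProduct_mem (w ∘ Sum.inr)
      rw [eq_neg_of_add_eq_zero_right hw₂, neg_dotProduct] at h
      rw [Submodule.mem_colon_singleton, neg_dotProduct, smul_eq_mul]
      convert I.add_mem h (haug (w ∘ Sum.inl)) using 1
      ring
    obtain ⟨x₁, hx₁, hx₁a⟩ := h₁.exact _ r (by rw [neg_vecMul, hw₁, neg_zero]) hw₁a
    rw [Submodule.mem_colon_singleton, smul_eq_mul] at hx₁a
    have hcycle : (w ∘ Sum.inr - x₁ ᵥ* Φ) ᵥ* P₂.D = 0 := by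
      have hcomm : Φ * P₂.D = P₁.D * Φ := hΦ.comm
      rw [sub_vecMul, vecMul_vecMul, hcomm, ← vecMul_vecMul, hx₁, neg_vecMul, sub_neg_eq_add,
        add_comm, hw₂]
    have hcyclea : (w ∘ Sum.inr - x₁ ᵥ* Φ) ⬝ᵥ P₂.aug ∈ I := by
      rw [sub_dotProduct, ← hri]
      convert I.sub_mem hi (I.add_mem (haug x₁) hx₁a) using 1
      ring
    obtain ⟨x₂, hx₂, hx₂a⟩ := h₂.exact _ s hcycle hcyclea
    refine ⟨Sum.elim x₁ x₂, ?_, ?_⟩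
    · rw [vecMul_cone_D, Sum.elim_comp_inl, Sum.elim_comp_inr, hx₁, hx₂, neg_neg, add_sub_cancel,
        Sum.elim_comp_inl_inr]
    · rw [dotProduct_cone_aug, Sum.elim_comp_inr]
      exact Ideal.mem_sup_right hx₂a

end Cone

section Graded

variable {R Γ σ B B' : Type*} [CommRing R] [SetLike σ R]

/-- `P` is a complex of graded free modules: the basis vector `b` has homological degree `deg b` and
internal degree `tw b`. -/
structure IsGraded [Sub Γ] (𝒜 : Γ → σ) (P : AugComplex B R) (deg : B → ℕ) (tw : B → Γ) : Prop where
  deg_eq : ∀ b c, P.D b c ≠ 0 → deg b = deg c + 1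
  deg_eq_zero : ∀ b, P.aug b ≠ 0 → deg b = 0
  D_mem : ∀ b c, P.D b c ∈ 𝒜 (tw b - tw c)
  aug_mem : ∀ b, P.aug b ∈ 𝒜 (tw b)

theorem IsGraded.deg_lt [Sub Γ] {𝒜 : Γ → σ} {P : AugComplex B R} {deg : B → ℕ} {tw : B → Γ}
    (h : P.IsGraded 𝒜 deg tw) (b c : B) (hbc : P.D b c ≠ 0) : deg c < deg b := by
  rw [h.deg_eq b c hbc]
  exact Nat.lt_succ_self _

/-- `Φ` is homogeneous of homological degree `-k` and internal degree zero. -/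
structure IsHomogeneousMap [Sub Γ] (𝒜 : Γ → σ) (k : ℕ) (deg : B → ℕ) (tw : B → Γ) (deg' : B' → ℕ)
    (tw' : B' → Γ) (Φ : Matrix B B' R) : Prop where
  deg_eq : ∀ b j, Φ b j ≠ 0 → deg b = deg' j + k
  mem : ∀ b j, Φ b j ∈ 𝒜 (tw b - tw' j)

variable [AddCommGroup Γ] [DecidableEq Γ] [AddSubmonoidClass σ R] (𝒜 : Γ → σ) [GradedRing 𝒜]
  {deg : B → ℕ} {tw : B → Γ} {deg' : B' → ℕ} {tw' : B' → Γ}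

/-- The part of `Φ` that is homogeneous of homological degree `-k` and internal degree zero. -/
def homogeneousPart (k : ℕ) (deg : B → ℕ) (tw : B → Γ) (deg' : B' → ℕ) (tw' : B' → Γ)
    (Φ : Matrix B B' R) : Matrix B B' R :=
  Matrix.of fun b j ↦ if deg b = deg' j + k then GradedRing.proj 𝒜 (tw b - tw' j) (Φ b j) else 0

theorem isHomogeneousMap_homogeneousPart (k : ℕ) (Φ : Matrix B B' R) :
    IsHomogeneousMap 𝒜 k deg tw deg' tw' (homogeneousPart 𝒜 k deg tw deg' tw' Φ) where
  deg_eq b j h := by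
    by_contra hdeg
    exact h (if_neg hdeg)
  mem b j := by
    rw [homogeneousPart, of_apply]
    split_ifs
    · exact SetLike.coe_mem _
    · exact zero_mem _

theorem proj_mul_of_mem_right {i j : Γ} (x : R) {y : R} (hy : y ∈ 𝒜 j) :
    GradedRing.proj 𝒜 (i + j) (x * y) = GradedRing.proj 𝒜 i x * y := by
  rw [GradedRing.proj_apply, GradedRing.proj_apply,
    DirectSum.coe_decompose_mul_add_of_right_mem 𝒜 hy]

theorem proj_mul_of_mem_left {i j : Γ} {x : R} (hx : x ∈ 𝒜 i) (y : R) :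
    GradedRing.proj 𝒜 (i + j) (x * y) = x * GradedRing.proj 𝒜 j y := by
  rw [GradedRing.proj_apply, GradedRing.proj_apply,
    DirectSum.coe_decompose_mul_add_of_left_mem 𝒜 hx]

theorem homogeneousPart_mul_D [Fintype B'] {Q : AugComplex B' R} (hQ : Q.IsGraded 𝒜 deg' tw')
    (Φ : Matrix B B' R) :
    homogeneousPart 𝒜 0 deg tw deg' tw' Φ * Q.D =
      homogeneousPart 𝒜 1 deg tw deg' tw' (Φ * Q.D) := by
  ext b c
  simp only [homogeneousPart, mul_apply, of_apply, add_zero, map_sum, Finset.ite_sum_zero]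
  refine Finset.sum_congr rfl fun j _ ↦ ?_
  by_cases hjc : Q.D j c = 0
  · simp only [hjc, mul_zero, map_zero, ite_self]
  · rw [← sub_add_sub_cancel (tw b) (tw' j) (tw' c), proj_mul_of_mem_right 𝒜 _ (hQ.D_mem j c),
      ite_mul, zero_mul, ← hQ.deg_eq j c hjc]

theorem D_mul_homogeneousPart [Fintype B] {P : AugComplex B R} (hP : P.IsGraded 𝒜 deg tw)
    (Φ : Matrix B B' R) :
    P.D * homogeneousPart 𝒜 0 deg tw deg' tw' Φ =
      homogeneousPart 𝒜 1 deg tw deg' tw' (P.D * Φ) := by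
  ext b c
  simp only [homogeneousPart, mul_apply, of_apply, add_zero, map_sum, Finset.ite_sum_zero]
  refine Finset.sum_congr rfl fun j _ ↦ ?_
  by_cases hbj : P.D b j = 0
  · simp only [hbj, zero_mul, map_zero, ite_self]
  · rw [← sub_add_sub_cancel (tw b) (tw j) (tw' c), proj_mul_of_mem_left 𝒜 (hP.D_mem b j),
      mul_ite, mul_zero, hP.deg_eq b j hbj]
    simp only [add_left_inj]

theorem homogeneousPart_mulVec_aug [Fintype B'] {Q : AugComplex B' R}
    (hQ : Q.IsGraded 𝒜 deg' tw') (Φ : Matrix B B' R) (b : B) :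
    (homogeneousPart 𝒜 0 deg tw deg' tw' Φ *ᵥ Q.aug) b =
      if deg b = 0 then GradedRing.proj 𝒜 (tw b) ((Φ *ᵥ Q.aug) b) else 0 := by
  simp only [homogeneousPart, mulVec, dotProduct, of_apply, add_zero, map_sum, Finset.ite_sum_zero]
  refine Finset.sum_congr rfl fun j _ ↦ ?_
  by_cases hj : Q.aug j = 0
  · simp only [hj, mul_zero, map_zero, ite_self]
  · nth_rw 2 [← sub_add_cancel (tw b) (tw' j)]
    rw [proj_mul_of_mem_right 𝒜 _ (hQ.aug_mem j), ite_mul, zero_mul, hQ.deg_eq_zero j hj]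

variable {𝒜}

theorem IsGraded.ite_proj_aug {P : AugComplex B R} (hP : P.IsGraded 𝒜 deg tw) (b : B) :
    (if deg b = 0 then GradedRing.proj 𝒜 (tw b) (P.aug b) else 0) = P.aug b := by
  split_ifs with hb
  · rw [GradedRing.proj_apply, DirectSum.decompose_of_mem_same 𝒜 (hP.aug_mem b)]
  · by_contra h
    exact hb (hP.deg_eq_zero b (Ne.symm h))

theorem IsChainMap.homogeneousPart [Fintype B] [Fintype B'] {I : Ideal R} {P : AugComplex B R}
    {Q : AugComplex B' R} {Φ : Matrix B B' R} (hΦ : IsChainMap I P Q Φ)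
    (hI : I.IsHomogeneous 𝒜) (hP : P.IsGraded 𝒜 deg tw) (hQ : Q.IsGraded 𝒜 deg' tw') :
    IsChainMap I P Q (homogeneousPart 𝒜 0 deg tw deg' tw' Φ) where
  comm := by rw [homogeneousPart_mul_D 𝒜 hQ, hΦ.comm, D_mul_homogeneousPart 𝒜 hP]
  aug_sub_mem b := by
    rw [homogeneousPart_mulVec_aug 𝒜 hQ, ← hP.ite_proj_aug]
    split_ifs
    · rw [← map_sub]
      exact hI _ (hΦ.aug_sub_mem b)
    · rw [sub_zero]
      exact I.zero_mem

theorem IsResolution.exists_isHomogeneousMap [Fintype B] [Fintype B'] {I : Ideal R}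
    {P : AugComplex B R} {Q : AugComplex B' R} (hQ : Q.IsResolution I) (hP : P.IsComplex I)
    (hI : I.IsHomogeneous 𝒜) (hPg : P.IsGraded 𝒜 deg tw) (hQg : Q.IsGraded 𝒜 deg' tw') :
    ∃ Φ, IsChainMap I P Q Φ ∧ IsHomogeneousMap 𝒜 0 deg tw deg' tw' Φ := by
  obtain ⟨Φ, hΦ⟩ := hQ.exists_isChainMap hP hPg.deg_lt
  exact ⟨_, hΦ.homogeneousPart hI hPg hQg, isHomogeneousMap_homogeneousPart 𝒜 0 Φ⟩

end Graded

section GradedConstructions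

variable {R Γ σ B : Type*} [CommRing R] [SetLike σ R] [AddCommGroup Γ] {𝒜 : Γ → σ}
  {deg : B → ℕ} {tw : B → Γ} {P : AugComplex B R} {I : Ideal R}

theorem IsGraded.regrade {Γ' σ' : Type*} [AddCommGroup Γ'] [SetLike σ' R] {ℬ : Γ' → σ'}
    (hP : P.IsGraded 𝒜 deg tw) (ψ : Γ →+ Γ') (hψ : ∀ γ, ∀ x ∈ 𝒜 γ, x ∈ ℬ (ψ γ)) :
    P.IsGraded ℬ deg (ψ ∘ tw) where
  deg_eq := hP.deg_eq
  deg_eq_zero := hP.deg_eq_zero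
  D_mem b c := by
    rw [Function.comp_apply, Function.comp_apply, ← map_sub]
    exact hψ _ _ (hP.D_mem b c)
  aug_mem b := hψ _ _ (hP.aug_mem b)

theorem IsGraded.smul_aug [SetLike.GradedMonoid 𝒜] (hP : P.IsGraded 𝒜 deg tw) {m : R} {d : Γ}
    (hm : m ∈ 𝒜 d) : IsGraded 𝒜 ⟨P.D, m • P.aug⟩ deg (fun b ↦ d + tw b) where
  deg_eq := hP.deg_eq
  deg_eq_zero b hb := hP.deg_eq_zero b (right_ne_zero_of_mul hb)
  D_mem b c := by
    rw [add_sub_add_left_eq_sub]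
    exact hP.D_mem b c
  aug_mem b := SetLike.mul_mem_graded hm (hP.aug_mem b)

variable [AddSubgroupClass σ R]

theorem IsGraded.cone {B₁ B₂ : Type*} {P₁ : AugComplex B₁ R} {P₂ : AugComplex B₂ R}
    {Φ : Matrix B₁ B₂ R} {deg₁ : B₁ → ℕ} {tw₁ : B₁ → Γ} {deg₂ : B₂ → ℕ} {tw₂ : B₂ → Γ} {d : Γ}
    (h₁ : P₁.IsGraded 𝒜 deg₁ tw₁) (h₂ : P₂.IsGraded 𝒜 deg₂ tw₂)
    (hΦ : IsHomogeneousMap 𝒜 0 deg₁ (fun b ↦ d + tw₁ b) deg₂ tw₂ Φ) :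
    (P₁.cone P₂ Φ).IsGraded 𝒜 (Sum.elim (fun b ↦ deg₁ b + 1) deg₂)
      (Sum.elim (fun b ↦ d + tw₁ b) tw₂) where
  deg_eq := by
    rintro (b | b) (c | c) h
    · exact congrArg (· + 1) (h₁.deg_eq b c (neg_ne_zero.mp h))
    · exact congrArg (· + 1) (hΦ.deg_eq b c h)
    · exact absurd rfl h
    · exact h₂.deg_eq b c h
  deg_eq_zero := by
    rintro (b | b) h
    · exact absurd rfl h
    · exact h₂.deg_eq_zero b h
  D_mem := by
    rintro (b | b) (c | c)
    · rw [Sum.elim_inl, Sum.elim_inl, add_sub_add_left_eq_sub]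
      exact neg_mem (h₁.D_mem b c)
    · exact hΦ.mem b c
    · exact zero_mem _
    · exact h₂.D_mem b c
  aug_mem := by
    rintro (b | b)
    · exact zero_mem _
    · exact h₂.aug_mem b

theorem IsGraded.cancel [SetLike.GradedMonoid 𝒜] (hP : P.IsGraded 𝒜 deg tw)
    {j k : B} {v : R} (hjk : deg k = deg j + 1) (hv : v ∈ 𝒜 (tw j - tw k)) :
    (P.cancel j k v).IsGraded 𝒜 (deg ∘ Subtype.val) (tw ∘ Subtype.val) where
  deg_eq b c h := by
    by_cases hbc : P.D b c = 0
    · have hne : P.D b j * v * P.D k c ≠ 0 := fun h0 ↦ h (by simp [AugComplex.cancel, hbc, h0])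
      have hb := hP.deg_eq b j (left_ne_zero_of_mul (left_ne_zero_of_mul hne))
      have hc := hP.deg_eq k c (right_ne_zero_of_mul hne)
      simp only [Function.comp_apply]
      omega
    · exact hP.deg_eq b c hbc
  deg_eq_zero b h := hP.deg_eq_zero b h
  D_mem b c := by
    refine sub_mem (hP.D_mem b c) ?_
    have h := SetLike.mul_mem_graded (SetLike.mul_mem_graded (hP.D_mem b j) hv) (hP.D_mem k c)
    rwa [sub_add_sub_cancel, sub_add_sub_cancel] at h
  aug_mem b := hP.aug_mem b

variable [DecidableEq Γ] [GradedRing 𝒜]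

theorem exists_mem_mul_eq_one {u : R} {γ : Γ} (hu : u ∈ 𝒜 γ) (hunit : IsUnit u) :
    ∃ v ∈ 𝒜 (-γ), v * u = 1 := by
  obtain ⟨w, hw⟩ := hunit.exists_left_inv
  refine ⟨GradedRing.proj 𝒜 (-γ) w, SetLike.coe_mem _, ?_⟩
  rw [← proj_mul_of_mem_right 𝒜 w hu, hw, neg_add_cancel, GradedRing.proj_apply,
    DirectSum.decompose_of_mem_same 𝒜 SetLike.GradedOne.one_mem]

theorem IsResolution.exists_forall_not_isUnit.{u} {B : Type u} [Fintype B] [Nontrivial R]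
    {P : AugComplex B R} {deg : B → ℕ} {tw : B → Γ} (hP : P.IsResolution I)
    (hPg : P.IsGraded 𝒜 deg tw) :
    ∃ (B' : Type u) (_ : Fintype B') (f : B' → B) (P' : AugComplex B' R), P'.IsResolution I ∧
      P'.IsGraded 𝒜 (deg ∘ f) (tw ∘ f) ∧ ∀ b c, ¬ IsUnit (P'.D b c) := by
  classical
  induction hn : Fintype.card B using Nat.strong_induction_on generalizing B with
  | _ n ih =>
    by_cases hunit : ∀ b c, ¬ IsUnit (P.D b c)
    · exact ⟨B, inferInstance, id, P, hP, hPg, hunit⟩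
    push Not at hunit
    obtain ⟨k, j, hkj⟩ := hunit
    have hdeg : deg k = deg j + 1 := hPg.deg_eq k j hkj.ne_zero
    have hjk : j ≠ k := by rintro rfl; omega
    have hk : P.aug k = 0 := by
      by_contra h
      have := hPg.deg_eq_zero k h
      omega
    obtain ⟨v, hv, hvu⟩ := exists_mem_mul_eq_one (hPg.D_mem k j) hkj
    rw [neg_sub] at hv
    have hcard : Fintype.card {b // b ≠ j ∧ b ≠ k} < n :=
      hn ▸ Fintype.card_subtype_lt (x := j) fun h ↦ h.1 rfl
    obtain ⟨B', hB', f, P', h⟩ := ih _ hcard (hP.cancel hjk hvu hk) (hPg.cancel hdeg hv) rfl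
    exact ⟨B', hB', Subtype.val ∘ f, P', h⟩

theorem IsResolution.exists_cone {B₁ B₂ : Type*} [Fintype B₁] [Fintype B₂] {P₁ : AugComplex B₁ R}
    {P₂ : AugComplex B₂ R} {deg₁ : B₁ → ℕ} {tw₁ : B₁ → Γ} {deg₂ : B₂ → ℕ} {tw₂ : B₂ → Γ} {m : R}
    {d : Γ} (hm : m ∈ 𝒜 d) (hI : I.IsHomogeneous 𝒜) (h₁ : P₁.IsResolution (I.colon {m}))
    (h₂ : P₂.IsResolution I) (h₁g : P₁.IsGraded 𝒜 deg₁ tw₁) (h₂g : P₂.IsGraded 𝒜 deg₂ tw₂) :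
    ∃ P : AugComplex (B₁ ⊕ B₂) R, P.IsResolution (Ideal.span {m} ⊔ I) ∧
      P.IsGraded 𝒜 (Sum.elim (fun b ↦ deg₁ b + 1) deg₂) (Sum.elim (fun b ↦ d + tw₁ b) tw₂) := by
  have hmP₁ : IsComplex ⟨P₁.D, m • P₁.aug⟩ I :=
    { sq_eq_zero := h₁.sq_eq_zero
      mulVec_aug_mem := fun b ↦ by
        rw [mulVec_smul, Pi.smul_apply, smul_eq_mul, mul_comm]
        exact Submodule.mem_colon_singleton.mp (h₁.mulVec_aug_mem b) }
  obtain ⟨Φ, hΦ, hΦg⟩ := h₂.exists_isHomogeneousMap hmP₁ hI (h₁g.smul_aug hm) h₂g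
  exact ⟨P₁.cone P₂ Φ, h₁.cone h₂ hΦ, h₁g.cone h₂g hΦg⟩

end GradedConstructions

section Map

variable {R R' B B' : Type*} [CommRing R] [CommRing R'] [Fintype B] [Fintype B']
  {P : AugComplex B R} {Q : AugComplex B' R} {I : Ideal R} {I' : Ideal R'} {f : R →+* R'}

/-- Base change of an augmented complex along `f`. -/
def map (f : R →+* R') (P : AugComplex B R) : AugComplex B R' where
  D := P.D.map f
  aug := f ∘ P.aug

theorem IsComplex.mono {J : Ideal R} (hP : P.IsComplex I) (hIJ : I ≤ J) : P.IsComplex J where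
  sq_eq_zero := hP.sq_eq_zero
  mulVec_aug_mem b := hIJ (hP.mulVec_aug_mem b)

theorem IsComplex.map (hP : P.IsComplex I) (hf : I ≤ I'.comap f) : (P.map f).IsComplex I' where
  sq_eq_zero := by
    rw [AugComplex.map, ← Matrix.map_mul, hP.sq_eq_zero, Matrix.map_zero _ (map_zero f)]
  mulVec_aug_mem b := by
    rw [AugComplex.map, ← RingHom.map_mulVec]
    exact hf (hP.mulVec_aug_mem b)

theorem IsChainMap.map {Φ : Matrix B B' R} (hΦ : IsChainMap I P Q Φ) (hf : I ≤ I'.comap f) :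
    IsChainMap I' (P.map f) (Q.map f) (Φ.map f) where
  comm := by
    simp only [AugComplex.map]
    rw [← Matrix.map_mul, hΦ.comm, Matrix.map_mul]
  aug_sub_mem b := by
    simp only [AugComplex.map]
    rw [← RingHom.map_mulVec, Function.comp_apply, ← map_sub]
    exact hf (hΦ.aug_sub_mem b)

theorem IsResolution.exists_deg_eq_and_tw_eq {Γ σ k : Type*} [SetLike σ R] [AddCommGroup Γ]
    [DecidableEq Γ] [AddSubgroupClass σ R] {𝒜 : Γ → σ} [GradedRing 𝒜] [CommRing k] [Nontrivial k]
    {deg : B → ℕ} {tw : B → Γ} {deg' : B' → ℕ} {tw' : B' → Γ} {J : Ideal R} {G : AugComplex B R}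
    {F : AugComplex B' R} (hG : G.IsResolution J) (hF : F.IsResolution I) (hJI : J ≤ I)
    (hI : I.IsHomogeneous 𝒜) (hGg : G.IsGraded 𝒜 deg tw) (hFg : F.IsGraded 𝒜 deg' tw')
    {ρ : R →+* R} (hρI : I ≤ J.comap ρ) (hρG : G.map ρ = G) {κ : R →+* k}
    (hκρ : κ.comp ρ = κ) (hκG : G.D.map κ = 0) (hκ : ∀ γ ≠ 0, ∀ x ∈ 𝒜 γ, κ x = 0) (b : B) :
    ∃ j, deg b = deg' j ∧ tw b = tw' j := by
  obtain ⟨Φ, hΦ, hΦg⟩ := hF.exists_isHomogeneousMap (hG.toIsComplex.mono hJI) hI hGg hFg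
  have hΦρ : IsChainMap J G (F.map ρ) (Φ.map ρ) := by
    simpa only [hρG] using hΦ.map hρI
  have hdegF (j l) (h : (F.map ρ).D j l ≠ 0) : deg' l < deg' j :=
    hFg.deg_lt j l fun h0 ↦ h (by simp only [AugComplex.map, map_apply, h0, map_zero])
  obtain ⟨j, hj⟩ := hG.exists_map_ne_zero (hF.toIsComplex.map hρI) hGg.deg_lt hdegF κ hκG hΦρ b
  have hκΦ : κ (Φ b j) ≠ 0 := by rwa [← hκρ]
  refine ⟨j, hΦg.deg_eq b j fun h ↦ hκΦ (by rw [h, map_zero]), ?_⟩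
  by_contra htw
  exact hκΦ (hκ _ (sub_ne_zero.mpr htw) _ (hΦg.mem b j))

end Map

theorem isResolution_bot {R : Type*} [CommRing R] :
    IsResolution (⟨0, 1⟩ : AugComplex Unit R) ⊥ where
  sq_eq_zero := Matrix.mul_zero 0
  mulVec_aug_mem b := by simp
  exact w s _ hw := by
    have hw0 : w = 0 := by
      ext b
      simpa using hw
    exact ⟨fun _ ↦ s, by simp [hw0], by simp⟩

section Total

variable {R B : Type*} [CommRing R] {ι : ℕ → Type*} (e : (Σ i, ι i) ≃ B)

/-- The components of a vector of the total module, sorted by homological degree. -/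
def split : (B → R) ≃ₗ[R] ∀ i, ι i → R :=
  LinearEquiv.funCongrLeft R R e ≪≫ₗ LinearEquiv.piCurry R fun _ _ ↦ R

theorem split_apply (x : B → R) (i : ℕ) (j : ι i) : split e x i j = x (e ⟨i, j⟩) :=
  rfl

theorem split_eval_surjective (i : ℕ) : Function.Surjective fun w : B → R ↦ split e w i :=
  (Function.surjective_eval i).comp (split e).surjective

theorem split_single [DecidableEq B] [∀ i, DecidableEq (ι i)] (i : ℕ) (k : ι i) :
    split e (Pi.single (e ⟨i, k⟩) 1 : B → R) = Pi.single i (Pi.single k 1) := by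
  funext i' j
  rw [split_apply]
  obtain rfl | hi := eq_or_ne i' i
  · simp only [Pi.single_apply, Pi.single_eq_same, e.apply_eq_iff_eq, Sigma.mk.injEq, heq_eq_eq,
      true_and]
  · rw [Pi.single_eq_of_ne hi, Pi.single_eq_of_ne, Pi.zero_apply]
    exact fun h ↦ hi (congrArg Sigma.fst (e.injective h))

/-- `P` is the total form of the complex with terms `ι i → R`, differentials `δ` and augmentation
`aug`. -/
structure IsTotal [Fintype B] (P : AugComplex B R) (e : (Σ i, ι i) ≃ B)
    (δ : ∀ i, (ι (i + 1) → R) →ₗ[R] ι i → R) (aug : (ι 0 → R) →ₗ[R] R) : Prop where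
  split_vecMul : ∀ x i, split e (x ᵥ* P.D) i = δ i (split e x (i + 1))
  dotProduct_aug : ∀ x, x ⬝ᵥ P.aug = aug (split e x 0)

variable [Fintype B] {δ : ∀ i, (ι (i + 1) → R) →ₗ[R] ι i → R} {aug : (ι 0 → R) →ₗ[R] R}

theorem exists_isTotal (δ : ∀ i, (ι (i + 1) → R) →ₗ[R] ι i → R) (aug : (ι 0 → R) →ₗ[R] R) :
    ∃ P : AugComplex B R, P.IsTotal e δ aug := by
  classical
  let d : (B → R) →ₗ[R] B → R := (split e).symm.toLinearMap ∘ₗ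
    LinearMap.pi (fun i ↦ δ i ∘ₗ LinearMap.proj (i + 1)) ∘ₗ (split e).toLinearMap
  let a : (B → R) →ₗ[R] R := aug ∘ₗ LinearMap.proj 0 ∘ₗ (split e).toLinearMap
  refine ⟨⟨LinearMap.toMatrixRight' d, fun b ↦ a fun c ↦ if b = c then 1 else 0⟩,
    fun x i ↦ ?_, fun x ↦ ?_⟩
  · have hd : x ᵥ* LinearMap.toMatrixRight' d = d x :=
      LinearMap.congr_fun (LinearMap.toMatrixRight'.symm_apply_apply d) x
    rw [hd]
    exact congrFun ((split e).apply_symm_apply _) i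
  · exact (a.pi_apply_eq_sum_univ x).symm

variable {P : AugComplex B R} {I : Ideal R} {e}

theorem IsTotal.isResolution (h : P.IsTotal e δ aug) (hsurj : ∀ r, ∃ x, r - aug x ∈ I)
    (hzero : LinearMap.range (δ 0) = Submodule.comap aug I)
    (hsucc : ∀ i, LinearMap.range (δ (i + 1)) = LinearMap.ker (δ i)) : P.IsResolution I where
  sq_eq_zero := by
    classical
    refine ext_of_single_vecMul fun b ↦ (split e).injective (funext fun i ↦ ?_)
    rw [← vecMul_vecMul, vecMul_zero, h.split_vecMul, h.split_vecMul, map_zero]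
    exact (hsucc i).le ⟨_, rfl⟩
  mulVec_aug_mem b := by
    classical
    rw [← single_one_dotProduct b (P.D *ᵥ P.aug), dotProduct_mulVec, h.dotProduct_aug,
      h.split_vecMul]
    exact hzero.le ⟨_, rfl⟩
  exact w s hw hwI := by
    have hcycle : ∀ i, split e w i ∈ LinearMap.range (δ i)
      | 0 => by rwa [hzero, Submodule.mem_comap, ← h.dotProduct_aug]
      | i + 1 => by rw [hsucc, LinearMap.mem_ker, ← h.split_vecMul, hw, map_zero, Pi.zero_apply]
    choose z hz using hcycle
    obtain ⟨y, hy⟩ := hsurj s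
    let x : ∀ i, ι i → R := fun i ↦ Nat.rec y (fun i _ ↦ z i) i
    refine ⟨(split e).symm x, (split e).injective (funext fun i ↦ ?_), ?_⟩
    · rw [h.split_vecMul, LinearEquiv.apply_symm_apply]
      exact hz i
    · rw [h.dotProduct_aug, LinearEquiv.apply_symm_apply, ← neg_sub]
      exact I.neg_mem hy

theorem IsTotal.exists_sub_mem (h : P.IsTotal e δ aug) (hP : P.IsResolution I) (r : R) :
    ∃ x, r - aug x ∈ I := by
  obtain ⟨x, -, hx⟩ := hP.exact 0 r (zero_vecMul _) (by rw [zero_dotProduct]; exact I.zero_mem)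
  refine ⟨split e x 0, ?_⟩
  rw [← h.dotProduct_aug, ← neg_sub]
  exact I.neg_mem hx

theorem IsTotal.mem_range (h : P.IsTotal e δ aug) (hP : P.IsResolution I) {i : ℕ} {z : ι i → R}
    (hz : ∀ j, δ j (Pi.single (M := fun i ↦ ι i → R) i z (j + 1)) = 0)
    (haug : aug (Pi.single (M := fun i ↦ ι i → R) i z 0) ∈ I) : z ∈ LinearMap.range (δ i) := by
  obtain ⟨y, hy, -⟩ := hP.exact ((split e).symm (Pi.single i z)) 0
    ((split e).injective <| funext fun j ↦ by
      rw [h.split_vecMul, LinearEquiv.apply_symm_apply, hz, map_zero, Pi.zero_apply])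
    (by rwa [h.dotProduct_aug, LinearEquiv.apply_symm_apply])
  refine ⟨split e y (i + 1), ?_⟩
  rw [← h.split_vecMul, hy, LinearEquiv.apply_symm_apply, Pi.single_eq_same]

theorem IsTotal.range_zero (h : P.IsTotal e δ aug) (hP : P.IsResolution I) :
    LinearMap.range (δ 0) = Submodule.comap aug I := by
  refine le_antisymm ?_ fun z hz ↦ h.mem_range hP (fun j ↦ ?_) (by rwa [Pi.single_eq_same])
  · rintro _ ⟨x, rfl⟩
    obtain ⟨w, rfl⟩ := split_eval_surjective e 1 x
    rw [Submodule.mem_comap, ← h.split_vecMul, ← h.dotProduct_aug]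
    exact hP.vecMul_dotProduct_mem w
  · rw [Pi.single_eq_of_ne j.succ_ne_zero, map_zero]

theorem IsTotal.range_succ (h : P.IsTotal e δ aug) (hP : P.IsResolution I) (i : ℕ) :
    LinearMap.range (δ (i + 1)) = LinearMap.ker (δ i) := by
  refine le_antisymm ?_ fun z hz ↦ h.mem_range hP (fun j ↦ ?_) ?_
  · rintro _ ⟨x, rfl⟩
    obtain ⟨w, rfl⟩ := split_eval_surjective e (i + 2) x
    rw [LinearMap.mem_ker, ← h.split_vecMul, ← h.split_vecMul, vecMul_vecMul, hP.sq_eq_zero,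
      vecMul_zero, map_zero, Pi.zero_apply]
  · obtain rfl | hj := eq_or_ne j i
    · rwa [Pi.single_eq_same]
    · rw [Pi.single_eq_of_ne (Nat.succ_injective.ne hj), map_zero]
  · rw [Pi.single_eq_of_ne i.succ_ne_zero.symm, map_zero]
    exact I.zero_mem

section Graded

variable {Γ σ : Type*} [Sub Γ] [SetLike σ R] {𝒜 : Γ → σ} {deg : B → ℕ} {tw : B → Γ}

theorem IsTotal.D_apply [∀ i, DecidableEq (ι i)] (h : P.IsTotal e δ aug) (i j : ℕ) (k : ι i)
    (l : ι j) :
    P.D (e ⟨i, k⟩) (e ⟨j, l⟩) =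
      δ j (Pi.single (M := fun i ↦ ι i → R) i (Pi.single k 1) (j + 1)) l := by
  classical
  rw [← split_single e, ← h.split_vecMul, single_one_vecMul]
  rfl

theorem IsTotal.D_apply_succ [∀ i, DecidableEq (ι i)] (h : P.IsTotal e δ aug) (i : ℕ)
    (k : ι (i + 1)) (l : ι i) : P.D (e ⟨i + 1, k⟩) (e ⟨i, l⟩) = δ i (Pi.single k 1) l := by
  rw [h.D_apply, Pi.single_eq_same]

theorem IsTotal.D_apply_eq_zero (h : P.IsTotal e δ aug) {i j : ℕ} (hij : i ≠ j + 1) (k : ι i)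
    (l : ι j) : P.D (e ⟨i, k⟩) (e ⟨j, l⟩) = 0 := by
  classical
  rw [h.D_apply, Pi.single_eq_of_ne hij.symm, map_zero, Pi.zero_apply]

theorem IsTotal.aug_apply [∀ i, DecidableEq (ι i)] (h : P.IsTotal e δ aug) (i : ℕ) (k : ι i) :
    P.aug (e ⟨i, k⟩) = aug (Pi.single (M := fun i ↦ ι i → R) i (Pi.single k 1) 0) := by
  classical
  rw [← split_single e, ← h.dotProduct_aug, single_one_dotProduct]

theorem IsTotal.aug_apply_zero [∀ i, DecidableEq (ι i)] (h : P.IsTotal e δ aug) (k : ι 0) :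
    P.aug (e ⟨0, k⟩) = aug (Pi.single k 1) := by
  rw [h.aug_apply, Pi.single_eq_same]

theorem IsTotal.aug_apply_eq_zero (h : P.IsTotal e δ aug) {i : ℕ} (hi : i ≠ 0) (k : ι i) :
    P.aug (e ⟨i, k⟩) = 0 := by
  classical
  rw [h.aug_apply, Pi.single_eq_of_ne hi.symm, map_zero]

theorem IsTotal.isGraded [∀ i, DecidableEq (ι i)] [ZeroMemClass σ R]
    (h : P.IsTotal e δ aug) (hdeg : ∀ i k, deg (e ⟨i, k⟩) = i)
    (hδ : ∀ i k l, δ i (Pi.single k 1) l ∈ 𝒜 (tw (e ⟨i + 1, k⟩) - tw (e ⟨i, l⟩)))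
    (haug : ∀ k, aug (Pi.single k 1) ∈ 𝒜 (tw (e ⟨0, k⟩))) : P.IsGraded 𝒜 deg tw where
  deg_eq b c hbc := by
    obtain ⟨⟨i, k⟩, rfl⟩ := e.surjective b
    obtain ⟨⟨j, l⟩, rfl⟩ := e.surjective c
    rw [hdeg, hdeg]
    by_contra hij
    exact hbc (h.D_apply_eq_zero hij k l)
  deg_eq_zero b hb := by
    obtain ⟨⟨i, k⟩, rfl⟩ := e.surjective b
    rw [hdeg]
    by_contra hi
    exact hb (h.aug_apply_eq_zero hi k)
  D_mem b c := by
    obtain ⟨⟨i, k⟩, rfl⟩ := e.surjective b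
    obtain ⟨⟨j, l⟩, rfl⟩ := e.surjective c
    obtain rfl | hij := eq_or_ne i (j + 1)
    · rw [h.D_apply_succ]
      exact hδ j k l
    · rw [h.D_apply_eq_zero hij]
      exact zero_mem _
  aug_mem b := by
    obtain ⟨⟨i, k⟩, rfl⟩ := e.surjective b
    obtain rfl | hi := eq_or_ne i 0
    · rw [h.aug_apply_zero]
      exact haug k
    · rw [h.aug_apply_eq_zero hi]
      exact zero_mem _

theorem IsGraded.exists_isTotal (hP : P.IsGraded 𝒜 deg tw) (hdeg : ∀ i k, deg (e ⟨i, k⟩) = i) :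
    ∃ δ aug, P.IsTotal e δ aug := by
  have hsplit (x : B → R) {b : B} {i : ℕ} (hb : deg b = i) :
      (split e).symm (Pi.single i (split e x i)) b = x b := by
    obtain ⟨⟨i', k⟩, rfl⟩ := e.surjective b
    obtain rfl : i' = i := (hdeg i' k).symm.trans hb
    change split e ((split e).symm (Pi.single i' (split e x i'))) i' k = split e x i' k
    rw [LinearEquiv.apply_symm_apply, Pi.single_eq_same]
  let d (i) := LinearMap.proj i ∘ₗ (split e).toLinearMap ∘ₗ P.D.vecMulLinear ∘ₗ
    (split e).symm.toLinearMap ∘ₗ LinearMap.single R (fun i ↦ ι i → R) (i + 1)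
  let a := dotProductBilin R R P.aug ∘ₗ (split e).symm.toLinearMap ∘ₗ
    LinearMap.single R (fun i ↦ ι i → R) 0
  refine ⟨d, a, fun x i ↦ ?_, fun x ↦ ?_⟩
  · funext j
    refine (dotProduct_comm _ _).trans
      ((dotProduct_congr_of_ne_zero fun b hb ↦ ?_).trans (dotProduct_comm _ _))
    refine (hsplit x ?_).symm
    rw [hP.deg_eq _ _ hb, hdeg]
  · rw [dotProduct_comm]
    exact dotProduct_congr_of_ne_zero fun b hb ↦ (hsplit x (hP.deg_eq_zero b hb)).symm

end Graded

end Total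

end AugComplex

attribute [local instance] weightedGradedAlgebra

section MonomialIdeal

variable {σ Γ : Type*} (K : Type*) [CommRing K]

/-- The ideal generated by the monomials with exponents in `A`. -/
noncomputable def monomialIdeal (A : Set (σ →₀ ℕ)) : Ideal (MvPolynomial σ K) :=
  Ideal.span ((fun a ↦ monomial a 1) '' A)

theorem mem_monomialIdeal {A : Set (σ →₀ ℕ)} {p : MvPolynomial σ K} :
    p ∈ monomialIdeal K A ↔ ∀ d ∈ p.support, ∃ a ∈ A, a ≤ d :=
  mem_ideal_span_monomial_image

theorem monomialIdeal_mono {A A' : Set (σ →₀ ℕ)} (h : A ⊆ A') :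
    monomialIdeal K A ≤ monomialIdeal K A' :=
  Ideal.span_mono (Set.image_mono h)

theorem monomialIdeal_empty : monomialIdeal K (∅ : Set (σ →₀ ℕ)) = ⊥ := by
  rw [monomialIdeal, Set.image_empty, Ideal.span_empty]

theorem monomialIdeal_insert (m : σ →₀ ℕ) (A : Set (σ →₀ ℕ)) :
    monomialIdeal K (insert m A) = Ideal.span {monomial m 1} ⊔ monomialIdeal K A := by
  rw [monomialIdeal, Set.image_insert_eq, Ideal.span_insert, monomialIdeal]

theorem monomialIdeal_colon (A : Set (σ →₀ ℕ)) (m : σ →₀ ℕ) :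
    (monomialIdeal K A).colon {monomial m 1} = monomialIdeal K ((· - m) '' A) := by
  ext p
  simp only [Submodule.mem_colon_singleton, smul_eq_mul, mem_monomialIdeal, mem_support_iff,
    coeff_mul_monomial', mul_one, Set.exists_mem_image, tsub_le_iff_right]
  constructor
  · intro h d hd
    exact h (d + m) (by rwa [if_pos le_add_self, add_tsub_cancel_right])
  · intro h d hd
    obtain ⟨hmd, hd⟩ := ite_ne_right_iff.mp hd
    simpa only [tsub_add_cancel_of_le hmd] using h (d - m) hd

theorem isHomogeneous_monomialIdeal [AddCommMonoid Γ] [DecidableEq Γ] (w : σ → Γ)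
    (A : Set (σ →₀ ℕ)) :
    (monomialIdeal K A).IsHomogeneous (weightedHomogeneousSubmodule K w) := by
  refine Ideal.homogeneous_span _ _ ?_
  rintro _ ⟨a, -, rfl⟩
  exact ⟨_, isWeightedHomogeneous_monomial w a 1 rfl⟩

theorem exists_finite_subset_monomialIdeal_eq [IsNoetherianRing K] [Finite σ]
    (A : Set (σ →₀ ℕ)) : ∃ A' ⊆ A, A'.Finite ∧ monomialIdeal K A' = monomialIdeal K A := by
  classical
  obtain ⟨T, hTA, hT⟩ := (Submodule.fg_span_iff_fg_span_finset_subset _).mp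
    (IsNoetherian.noetherian (monomialIdeal K A))
  obtain ⟨A', hA'A, rfl⟩ := Finset.subset_set_image_iff.mp hTA
  refine ⟨A', hA'A, A'.finite_toSet, ?_⟩
  rw [monomialIdeal, monomialIdeal, ← Finset.coe_image]
  exact hT.symm

theorem exists_isResolution_monomialIdeal [AddCommGroup Γ] (w : σ → Γ)
    {A : Set (σ →₀ ℕ)} (hA : A.Finite) {S : Set σ}
    (hS : A ⊆ Finsupp.supported ℕ ℕ S) (f : σ →₀ ℕ) :
    ∃ (B : Type) (_ : Fintype B) (P : AugComplex B (MvPolynomial σ K)) (deg : B → ℕ)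
      (e : B → σ →₀ ℕ), P.IsResolution (monomialIdeal K ((· - f) '' A)) ∧
        P.IsGraded (weightedHomogeneousSubmodule K w) deg (Finsupp.weight w ∘ e) ∧
        ∀ b, e b ∈ Finsupp.supported ℕ ℕ S := by
  classical
  induction A, hA using Set.Finite.induction_on generalizing f with
  | empty =>
    refine ⟨Unit, inferInstance, ⟨0, 1⟩, 0, 0, ?_, ?_, fun _ ↦ zero_mem _⟩
    · rw [Set.image_empty, monomialIdeal_empty]
      exact AugComplex.isResolution_bot
    · exact ⟨fun _ _ h ↦ absurd rfl h, fun _ _ ↦ rfl, fun _ _ ↦ zero_mem _, fun _ ↦ by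
        simpa using isWeightedHomogeneous_one K w⟩
  | @insert m A _ _ ih =>
    obtain ⟨hm, hAS⟩ := Set.insert_subset_iff.mp hS
    obtain ⟨B₂, _, P₂, deg₂, e₂, h₂, h₂g, h₂S⟩ := ih hAS f
    obtain ⟨B₁, _, P₁, deg₁, e₁, h₁, h₁g, h₁S⟩ := ih hAS (f + (m - f))
    -- The colon ideals are again translates, so the induction has to range over all `f`.
    have hcolon : (monomialIdeal K ((· - f) '' A)).colon {monomial (m - f) 1} =
        monomialIdeal K ((· - (f + (m - f))) '' A) := by
      simp only [monomialIdeal_colon, Set.image_image, tsub_tsub]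
    obtain ⟨P, hP, hPg⟩ := AugComplex.IsResolution.exists_cone
      (isWeightedHomogeneous_monomial w (m - f) (1 : K) rfl) (isHomogeneous_monomialIdeal K w _)
      (hcolon ▸ h₁) h₂ h₁g h₂g
    refine ⟨B₁ ⊕ B₂, inferInstance, P, Sum.elim (fun b ↦ deg₁ b + 1) deg₂,
      Sum.elim (fun b ↦ (m - f) + e₁ b) e₂, ?_, ?_, ?_⟩
    · rwa [Set.image_insert_eq, monomialIdeal_insert]
    · convert hPg using 1
      ext (b | b) <;> simp
    · have hmf : m - f ∈ Finsupp.supported ℕ ℕ S := fun i hi ↦ hm (Finsupp.support_tsub hi)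
      rintro (b | b)
      · exact add_mem hmf (h₁S b)
      · exact h₂S b

end MonomialIdeal

section Multigrading

variable {σ : Type*} (K : Type*) [CommRing K]

theorem weightedHomogeneousSubmodule_le_comp {Γ Γ' : Type*} [AddCommMonoid Γ] [AddCommMonoid Γ']
    (w : σ → Γ) (ψ : Γ →+ Γ') (γ : Γ) :
    weightedHomogeneousSubmodule K w γ ≤ weightedHomogeneousSubmodule K (ψ ∘ w) (ψ γ) := by
  intro p hp d hd
  rw [← hp hd]
  simp only [Finsupp.weight_apply, Function.comp_apply, map_finsuppSum, map_nsmul]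

variable {K}

theorem constantCoeff_eq_zero_of_mem_weightedHomogeneousSubmodule {Γ : Type*} [AddCommMonoid Γ]
    {w : σ → Γ} {γ : Γ} (hγ : γ ≠ 0) {p : MvPolynomial σ K}
    (hp : p ∈ weightedHomogeneousSubmodule K w γ) : constantCoeff p = 0 := by
  rw [constantCoeff_eq]
  exact hp.coeff_eq_zero 0 (by rwa [map_zero, ne_comm])

variable [DecidableEq σ]

/-- The weights of the fine grading of `K[σ]` by `σ → ℤ`, for which `X i` has degree the `i`-th unit
vector. -/
def multiWeight (i : σ) : σ → ℤ :=
  Pi.single i 1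

theorem weight_multiWeight (d : σ →₀ ℕ) : Finsupp.weight multiWeight d = fun i ↦ (d i : ℤ) := by
  ext i
  rw [Finsupp.weight_apply, Finsupp.sum, Finset.sum_apply,
    Finset.sum_eq_single i (fun j _ hj ↦ by simp [multiWeight, hj.symm]) (by simp +contextual)]
  simp [multiWeight]

theorem eq_of_mem_multiWeight {γ : σ → ℤ} {p : MvPolynomial σ K}
    (hp : p ∈ weightedHomogeneousSubmodule K multiWeight γ) {d : σ →₀ ℕ} (hd : coeff d p ≠ 0)
    (i : σ) : (d i : ℤ) = γ i := by
  rw [← hp hd, weight_multiWeight]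

theorem mem_supported_of_mem_multiWeight {γ : σ → ℤ} {S : Set σ} (hγ : ∀ i ∉ S, γ i = 0)
    {p : MvPolynomial σ K} (hp : p ∈ weightedHomogeneousSubmodule K multiWeight γ) :
    p ∈ supported K S := by
  rw [MvPolynomial.mem_supported]
  intro i hi
  obtain ⟨d, hd, hid⟩ := (mem_vars_iff_mem_support i).mp hi
  by_contra hiS
  have h := eq_of_mem_multiWeight hp (mem_support_iff.mp hd) i
  rw [hγ i hiS, Nat.cast_eq_zero] at h
  exact Finsupp.mem_support_iff.mp hid h

theorem eq_C_constantCoeff_of_mem_multiWeight {γ : σ → ℤ} {p : MvPolynomial σ K}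
    (hp : p ∈ weightedHomogeneousSubmodule K multiWeight γ) (h0 : constantCoeff p ≠ 0) :
    p = C (constantCoeff p) := by
  ext d
  rw [coeff_C, constantCoeff_eq]
  split_ifs with hd
  · rw [hd]
  · by_contra hp0
    refine hd (Finsupp.ext fun i ↦ ?_)
    exact_mod_cast (eq_of_mem_multiWeight hp h0 i).trans (eq_of_mem_multiWeight hp hp0 i).symm

end Multigrading

section Retraction

variable {σ : Type*} (K : Type*) [CommRing K] (S : Set σ)

/-- The retraction of `K[σ]` onto `K[S]` that sends the variables outside `S` to zero. -/
noncomputable def retraction : MvPolynomial σ K →+* MvPolynomial σ K :=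
  (aeval (R := K) (S.indicator X)).toRingHom

variable {K S}

theorem retraction_C (c : K) : retraction K S (C c) = C c :=
  aeval_C _ c

theorem retraction_X (i : σ) : retraction K S (X i) = S.indicator X i :=
  aeval_X _ i

theorem retraction_of_mem_supported {p : MvPolynomial σ K} (hp : p ∈ supported K S) :
    retraction K S p = p := by
  refine hom_congr_vars (f₂ := RingHom.id _) (RingHom.ext retraction_C) (fun i hi _ ↦ ?_) rfl
  rw [retraction_X, Set.indicator_of_mem (MvPolynomial.mem_supported.mp hp hi), RingHom.id_apply]

theorem monomial_mem_supported {a : σ →₀ ℕ} (ha : a ∈ Finsupp.supported ℕ ℕ S) (c : K) :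
    monomial a c ∈ supported K S := by
  classical
  rw [MvPolynomial.mem_supported]
  by_cases hc : c = 0
  · simp [hc]
  · rwa [vars_monomial hc]

theorem retraction_monomial_eq_zero {a : σ →₀ ℕ} (ha : a ∉ Finsupp.supported ℕ ℕ S) (c : K) :
    retraction K S (monomial a c) = 0 := by
  obtain ⟨i, hi, hiS⟩ := Set.not_subset.mp ha
  refine (aeval_monomial _ a c).trans (mul_eq_zero_of_right _ (Finset.prod_eq_zero hi ?_))
  beta_reduce
  rw [Set.indicator_of_notMem hiS, zero_pow (Finsupp.mem_support_iff.mp hi)]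

theorem constantCoeff_comp_retraction :
    constantCoeff.comp (retraction K S) = (constantCoeff : MvPolynomial σ K →+* K) := by
  refine ringHom_ext (fun c ↦ by rw [RingHom.comp_apply, retraction_C]) fun i ↦ ?_
  rw [RingHom.comp_apply, retraction_X]
  by_cases hi : i ∈ S
  · rw [Set.indicator_of_mem hi]
  · rw [Set.indicator_of_notMem hi, map_zero, constantCoeff_X]

theorem monomialIdeal_le_comap_retraction (A : Set (σ →₀ ℕ)) :
    monomialIdeal K A ≤
      (monomialIdeal K (A ∩ Finsupp.supported ℕ ℕ S)).comap (retraction K S) := by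
  refine Ideal.span_le.mpr ?_
  rintro _ ⟨a, ha, rfl⟩
  change retraction K S (monomial a 1) ∈ monomialIdeal K _
  by_cases haS : a ∈ Finsupp.supported ℕ ℕ S
  · rw [retraction_of_mem_supported (monomial_mem_supported haS 1)]
    exact Ideal.subset_span ⟨a, ⟨ha, haS⟩, rfl⟩
  · rw [retraction_monomial_eq_zero haS]
    exact zero_mem _

end Retraction

section Minimal

namespace AugComplex

variable {σ K B : Type*} {deg : B → ℕ} {e : B → σ →₀ ℕ}

theorem IsGraded.degree [CommRing K] [Finite σ] [DecidableEq σ]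
    {P : AugComplex B (MvPolynomial σ K)}
    (hP : P.IsGraded (weightedHomogeneousSubmodule K multiWeight) deg
      (Finsupp.weight multiWeight ∘ e)) :
    P.IsGraded (weightedHomogeneousSubmodule K fun _ ↦ (1 : ℤ)) deg
      (fun b ↦ ((e b).degree : ℤ)) := by
  have := Fintype.ofFinite σ
  let ψ : (σ → ℤ) →+ ℤ := ∑ i, Pi.evalAddMonoidHom (fun _ ↦ ℤ) i
  have hψ (v : σ → ℤ) : ψ v = ∑ i, v i := by simp [ψ]
  have hw : ψ ∘ multiWeight = fun _ : σ ↦ (1 : ℤ) := by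
    ext i
    simp [hψ, multiWeight]
  have htw : (fun b ↦ ((e b).degree : ℤ)) = ψ ∘ Finsupp.weight multiWeight ∘ e := by
    ext b
    simp [hψ, weight_multiWeight, Finsupp.degree_eq_sum]
  rw [htw, ← hw]
  exact hP.regrade ψ fun γ ↦ weightedHomogeneousSubmodule_le_comp K multiWeight ψ γ

theorem IsGraded.map_retraction_eq_self [CommRing K] [DecidableEq σ] {S : Set σ}
    {P : AugComplex B (MvPolynomial σ K)}
    (hP : P.IsGraded (weightedHomogeneousSubmodule K multiWeight) deg
      (Finsupp.weight multiWeight ∘ e))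
    (he : ∀ b, e b ∈ Finsupp.supported ℕ ℕ S) : P.map (retraction K S) = P := by
  have htw (b : B) (i) (hi : i ∉ S) : (Finsupp.weight multiWeight ∘ e) b i = 0 := by
    simp only [Function.comp_apply, weight_multiWeight]
    exact_mod_cast Finsupp.notMem_support_iff.mp fun h ↦ hi (he b h)
  have hD (b c) : P.D b c ∈ supported K S :=
    mem_supported_of_mem_multiWeight (fun i hi ↦ by
      rw [Pi.sub_apply, htw b i hi, htw c i hi, sub_zero]) (hP.D_mem b c)
  have haug (b) : P.aug b ∈ supported K S :=
    mem_supported_of_mem_multiWeight (htw b) (hP.aug_mem b)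
  have hDρ : P.D.map (retraction K S) = P.D :=
    Matrix.ext fun b c ↦ retraction_of_mem_supported (hD b c)
  have haugρ : retraction K S ∘ P.aug = P.aug := by
    funext b
    exact retraction_of_mem_supported (haug b)
  rw [AugComplex.map, hDρ, haugρ]

end AugComplex

variable {σ K : Type*} [Field K] [Finite σ]

theorem exists_isResolution_map_constantCoeff_eq_zero {A : Set (σ →₀ ℕ)} {S : Set σ}
    (hS : A ⊆ Finsupp.supported ℕ ℕ S) :
    ∃ (B : Type) (_ : Fintype B) (P : AugComplex B (MvPolynomial σ K)) (deg tw : B → ℕ),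
      P.IsResolution (monomialIdeal K A) ∧
        P.IsGraded (weightedHomogeneousSubmodule K fun _ ↦ (1 : ℤ)) deg (fun b ↦ (tw b : ℤ)) ∧
        P.map (retraction K S) = P ∧ P.D.map constantCoeff = 0 := by
  classical
  obtain ⟨A', hA'A, hA', hIA'⟩ := exists_finite_subset_monomialIdeal_eq K A
  obtain ⟨B₀, _, P₀, deg₀, e₀, hP₀, hP₀g, he₀⟩ :=
    exists_isResolution_monomialIdeal K multiWeight hA' (hA'A.trans hS) 0
  simp only [tsub_zero, Set.image_id', hIA'] at hP₀
  obtain ⟨B, _, f, P, hP, hPg, hunit⟩ := hP₀.exists_forall_not_isUnit hP₀g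
  refine ⟨B, inferInstance, P, deg₀ ∘ f, fun b ↦ (e₀ (f b)).degree, hP, hPg.degree,
    hPg.map_retraction_eq_self fun b ↦ he₀ (f b), ?_⟩
  ext b c
  by_contra h
  refine hunit b c ?_
  rw [eq_C_constantCoeff_of_mem_multiWeight (hPg.D_mem b c) h]
  exact (IsUnit.mk0 _ h).map C

end Minimal

section StandardGrading

variable {σ K : Type*} [CommRing K] {p : MvPolynomial σ K}

theorem weight_one_eq_degree (d : σ →₀ ℕ) : Finsupp.weight (fun _ ↦ (1 : ℤ)) d = d.degree := by
  simp [Finsupp.weight_apply, Finsupp.sum, Finsupp.degree_apply]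

theorem mem_weightedHomogeneousSubmodule_one {a : ℕ} :
    p ∈ weightedHomogeneousSubmodule K (fun _ ↦ (1 : ℤ)) a ↔ p.IsHomogeneous a := by
  refine forall_congr' fun d ↦ ?_
  rw [weight_one_eq_degree, Nat.cast_inj, Finsupp.degree_eq_weight_one]
  rfl

theorem mem_weightedHomogeneousSubmodule_one_sub {a b : ℕ} :
    p ∈ weightedHomogeneousSubmodule K (fun _ ↦ (1 : ℤ)) (a - b) ↔
      p = 0 ∨ b ≤ a ∧ p.IsHomogeneous (a - b) := by
  obtain hab | hab := le_or_gt b a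
  · rw [← Nat.cast_sub hab, mem_weightedHomogeneousSubmodule_one, and_iff_right hab]
    refine ⟨Or.inr, ?_⟩
    rintro (rfl | hp)
    exacts [isHomogeneous_zero _ _ _, hp]
  · rw [or_iff_left fun h ↦ hab.not_ge h.1]
    refine ⟨fun hp ↦ ?_, fun hp ↦ hp ▸ zero_mem _⟩
    ext d
    by_contra hd
    have hdeg := hp hd
    rw [weight_one_eq_degree] at hdeg
    omega

end StandardGrading

namespace GFR

variable {n : ℕ} {K : Type} [Field K] {I : Ideal (MvPolynomial (Fin n) K)}

theorem finite_sigma (F : GFR n K I) : Finite (Σ i, Fin (F.rk i)) := by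
  refine Finite.of_surjective
    (fun b : Σ i : Fin (F.len + 1), Fin (F.rk i) ↦ (⟨b.1, b.2⟩ : Σ i, Fin (F.rk i))) ?_
  rintro ⟨i, j⟩
  have hi : i ≤ F.len := by
    by_contra hi
    have hrk := F.rk_zero i (not_le.mp hi)
    exact absurd j.pos (by omega)
  exact ⟨⟨⟨i, Nat.lt_succ_of_le hi⟩, j⟩, rfl⟩

theorem exists_augComplex (F : GFR n K I) :
    ∃ (B : Type) (_ : Fintype B) (P : AugComplex B (MvPolynomial (Fin n) K)) (deg tw : B → ℕ),
      P.IsResolution I ∧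
        P.IsGraded (weightedHomogeneousSubmodule K fun _ ↦ (1 : ℤ)) deg (fun b ↦ (tw b : ℤ)) ∧
        ∀ b, ∃ i j, deg b = i ∧ tw b = F.tw i j := by
  have := F.finite_sigma
  have := Fintype.ofFinite (Σ i, Fin (F.rk i))
  obtain ⟨P, hP⟩ := AugComplex.exists_isTotal (Equiv.refl (Σ i, Fin (F.rk i))) F.δ F.aug
  refine ⟨_, inferInstance, P, Sigma.fst, fun b ↦ F.tw b.1 b.2,
    hP.isResolution F.aug_surj F.exact_zero F.exact_succ, hP.isGraded (fun _ _ ↦ rfl) ?_ ?_,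
    fun b ↦ ⟨b.1, b.2, rfl, rfl⟩⟩
  · exact fun i k l ↦ mem_weightedHomogeneousSubmodule_one_sub.mpr (F.δ_homog i k l)
  · exact fun k ↦ mem_weightedHomogeneousSubmodule_one.mpr (F.aug_homog k)

theorem exists_tw_le (F : GFR n K I) :
    ∃ r, ∀ i (j : Fin (F.rk i)), F.tw i j ≤ r + i := by
  have := F.finite_sigma
  obtain ⟨r, hr⟩ := (Set.finite_range fun b : Σ i, Fin (F.rk i) ↦ F.tw b.1 b.2).bddAbove
  exact ⟨r, fun i j ↦ (hr ⟨⟨i, j⟩, rfl⟩).trans (Nat.le_add_right r i)⟩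

theorem exists_tw_le_regR (F : GFR n K I) :
    ∃ G : GFR n K I, ∀ i (j : Fin (G.rk i)), G.tw i j ≤ regR I + i :=
  Nat.sInf_mem (s := {r | ∃ G : GFR n K I, ∀ i (j : Fin (G.rk i)), G.tw i j ≤ r + i})
    (F.exists_tw_le.imp fun _ hr ↦ ⟨F, hr⟩)

end GFR

theorem AugComplex.IsResolution.exists_gfr {n : ℕ} {K B : Type} [Field K] [Fintype B]
    {I : Ideal (MvPolynomial (Fin n) K)} {P : AugComplex B (MvPolynomial (Fin n) K)}
    {deg tw : B → ℕ} (hP : P.IsResolution I)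
    (hg : P.IsGraded (weightedHomogeneousSubmodule K fun _ ↦ (1 : ℤ)) deg fun b ↦ (tw b : ℤ)) :
    ∃ F : GFR n K I, ∀ i j, ∃ b, deg b = i ∧ tw b = F.tw i j := by
  let rk (i : ℕ) : ℕ := Fintype.card {b // deg b = i}
  let e : (Σ i, Fin (rk i)) ≃ B :=
    (Equiv.sigmaCongrRight fun _ ↦ (Fintype.equivFin _).symm).trans (Equiv.sigmaFiberEquiv deg)
  have hdeg (i) (k : Fin (rk i)) : deg (e ⟨i, k⟩) = i := ((Fintype.equivFin _).symm k).2
  obtain ⟨δ, aug, h⟩ := hg.exists_isTotal hdeg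
  refine ⟨{
    len := Finset.univ.sup deg
    rk := rk
    rk_zero i hi := Fintype.card_eq_zero_iff.mpr
      ⟨fun b ↦ hi.not_ge (b.2 ▸ Finset.le_sup (f := deg) (Finset.mem_univ b.1))⟩
    tw i k := tw (e ⟨i, k⟩)
    δ := δ
    δ_homog i k l := mem_weightedHomogeneousSubmodule_one_sub.mp
      (h.D_apply_succ i k l ▸ hg.D_mem _ _)
    aug := aug
    aug_homog k := mem_weightedHomogeneousSubmodule_one.mp (h.aug_apply_zero k ▸ hg.aug_mem _)
    aug_surj := h.exists_sub_mem hP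
    exact_zero := h.range_zero hP
    exact_succ := h.range_succ hP }, fun i k ↦ ⟨_, hdeg i k, rfl⟩⟩

section Regularity

variable (K : Type) [Field K] {n : ℕ}

theorem nonempty_gfr_monomialIdeal (A : Set (Fin n →₀ ℕ)) :
    Nonempty (GFR n K (monomialIdeal K A)) := by
  obtain ⟨B, _, P, deg, tw, hP, hPg, -, -⟩ :=
    exists_isResolution_map_constantCoeff_eq_zero (K := K) (A := A) (S := Set.univ) (by simp)
  obtain ⟨F, -⟩ := hP.exists_gfr hPg
  exact ⟨F⟩

/-- The exponent vector of the squarefree monomial of a set of vertices. -/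
noncomputable def edgeExponent (e : Finset (Fin n)) : Fin n →₀ ℕ :=
  Finsupp.indicator e fun _ _ ↦ 1

theorem support_edgeExponent (e : Finset (Fin n)) : (edgeExponent e).support = e := by
  ext i
  simp [edgeExponent, Finsupp.indicator_apply]

theorem edgeMonomial_eq_monomial (e : Finset (Fin n)) :
    edgeMonomial K e = monomial (edgeExponent e) 1 := by
  rw [edgeMonomial, monomial_eq, map_one, one_mul, Finsupp.prod, support_edgeExponent]
  exact Finset.prod_congr rfl fun i hi ↦ by
    rw [edgeExponent, Finsupp.indicator_of_mem hi, pow_one]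

theorem Clutter.edgeIdeal_eq_monomialIdeal (C : Clutter n) :
    C.edgeIdeal K = monomialIdeal K (edgeExponent '' C.edges) := by
  rw [edgeIdeal, funext (edgeMonomial_eq_monomial K), monomialIdeal, Set.image_image]

theorem Clutter.image_edgeExponent_induced (C : Clutter n) (S : Finset (Fin n)) :
    edgeExponent '' (C.induced S).edges =
      edgeExponent '' C.edges ∩ (Finsupp.supported ℕ ℕ (S : Set (Fin n)) : Set (Fin n →₀ ℕ)) := by
  rw [← Set.image_inter_preimage]
  congr 1
  ext e
  simp [induced, Finsupp.mem_supported, support_edgeExponent]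

theorem stmt_3_general (A : Set (Fin n →₀ ℕ)) (S : Set (Fin n)) :
    regR (monomialIdeal K (A ∩ Finsupp.supported ℕ ℕ S)) ≤ regR (monomialIdeal K A) := by
  obtain ⟨F₀⟩ := nonempty_gfr_monomialIdeal K A
  obtain ⟨F, hF⟩ := F₀.exists_tw_le_regR
  obtain ⟨B', _, Q, deg', tw', hQ, hQg, hQF⟩ := F.exists_augComplex
  obtain ⟨B, _, P, deg, tw, hP, hPg, hPρ, hPκ⟩ :=
    exists_isResolution_map_constantCoeff_eq_zero (K := K)
      (A.inter_subset_right : A ∩ Finsupp.supported ℕ ℕ S ⊆ _)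
  have htwist (b : B) : ∃ j, deg b = deg' j ∧ (tw b : ℤ) = tw' j :=
    hP.exists_deg_eq_and_tw_eq hQ (monomialIdeal_mono K Set.inter_subset_left)
      (isHomogeneous_monomialIdeal K (fun _ ↦ (1 : ℤ)) A) hPg hQg
      (monomialIdeal_le_comap_retraction A) hPρ constantCoeff_comp_retraction hPκ
      (fun _ hγ _ ↦ constantCoeff_eq_zero_of_mem_weightedHomogeneousSubmodule hγ) b
  obtain ⟨G, hG⟩ := hP.exists_gfr hPg
  refine Nat.sInf_le ⟨G, fun i k ↦ ?_⟩
  obtain ⟨b, hbi, hbk⟩ := hG i k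
  obtain ⟨j, hdeg, htw⟩ := htwist b
  obtain ⟨i', k', hji', hjk'⟩ := hQF j
  obtain rfl : i' = i := by rw [← hji', ← hdeg, hbi]
  rw [← hbk, Nat.cast_inj.mp htw, hjk']
  exact hF i' k'

end Regularity

/-- The regularity of an induced subclutter is at most the regularity
of the clutter: `reg(R/I(C[S])) ≤ reg(R/I(C))`. -/
theorem stmt_3 (K : Type) [Field K] {n : ℕ} (C : Clutter n) (S : Finset (Fin n)) :
    regR ((C.induced S).edgeIdeal K) ≤ regR (C.edgeIdeal K) := by
  have h := stmt_3_general K (edgeExponent '' (C.edges : Set (Finset (Fin n)))) (S : Set (Fin n))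
  rwa [← C.image_edgeExponent_induced, ← Clutter.edgeIdeal_eq_monomialIdeal,
    ← Clutter.edgeIdeal_eq_monomialIdeal] at h
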